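/- Let (A_n)_{n≥1} be a family of symmetric random n×n real matrices which is approximately uncorrelated with variance profile S_n = (Var[A_{n,ij}])_{i,j=1}^n, and assume that for every simple tree T the homomorphism density t(T,S_n) has a limit as n → ∞. Then there exists a unique probability measure μ on ℝ with moments m_{2m}(μ) = ∑_{T∈𝒯_m} lim_{n→∞} t(T,S_n) and m_{2m+1}(μ) = 0 for every m ∈ ℤ≥0, and this measure μ is compactly supported. -/

import Mathlib

/-!
The entries of `S n` are nonnegative and bounded by some `s ^ 2` uniformly in `n` (the case `R = 1`,
`r = 0`, `m = 2` of the moment bounds).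

Fix a nonnegative `n × n` matrix `S` and let `R i k` be the sum over plane trees with `k / 2` edges
of the `n`-normalised weights of the labelings with root label `i` (zero for odd `k`,
`OTree.fullMoment`). Removing the first child of the root gives the Catalan-type recurrence
`R i (k + 2) = ∑_{a + b = k} (∑ j, S i j / n * R j a) * R i b`. The same recurrence is the
first-return decomposition of the corner entry of the powers of an arrow matrix with zero corner
whose border and diagonal encode the measure `∑ j, S i j / n • μ j`. Thus, if the `μ j` are finitely
supported probability measures whose moments up to order `D` are those of `R j`, the spectral
measure of the arrow matrix at the corner does the same for `R i` up to order `D + 1`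
(`AtomicMoments.arrow`, `exists_atomicMoments_eq`). All supports stay in `(-2s, 2s)`: the induction
carries the bounds `∫ dμ(x) / (2s ∓ x) ≤ 1 / s`, which are preserved since
`1 / (2s - s ^ 2 * (1 / s)) = 1 / s` and which exclude solutions of the secular equation outside
`(-2s, 2s)`.

Averaging over `i` yields probability measures on `[-2s, 2s]` whose moments converge to the required
numbers. The space of probability measures on a compact interval is compact, so a limit
measure exists (`exists_measure_of_tendsto`). Conversely, any measure with the same moments lives on
the same interval by Markov's inequality for high powers, and is then determined by its moments
by Weierstrass approximation (`eq_of_moments`).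
-/

open MeasureTheory ProbabilityTheory Filter Matrix
open scoped ENNReal NNReal BigOperators Topology

noncomputable section

/-- A family of symmetric random matrices (of size `d n` at index `n`) is *approximately
uncorrelated with variance profile*. -/
def ApproxUncorrelatedVP {Ω : ℕ → Type} [∀ n, MeasurableSpace (Ω n)]
    (P : ∀ n, Measure (Ω n)) (d : ℕ → ℕ)
    (A : (n : ℕ) → Ω n → Matrix (Fin (d n)) (Fin (d n)) ℝ) : Prop :=
  (∀ R r : ℕ, r ≤ R → ∀ m : Fin R → ℕ, (∀ i : Fin R, (i : ℕ) < r → m i = 1) →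
    ∃ C : ℝ, 0 < C ∧ ∀ n : ℕ, ∀ idx : Fin R → Fin (d n) × Fin (d n),
      (∀ k l, k ≠ l → Sym2.mk (idx k) ≠ Sym2.mk (idx l)) →
      |∫ ω, ∏ k, (A n ω (idx k).1 (idx k).2) ^ (m k) ∂ P n| ≤ C * (n : ℝ) ^ (-(r : ℝ) / 2))
  ∧
  (∀ R : ℕ, 1 ≤ R → ∀ ε : ℝ, 0 < ε → ∃ N : ℕ, ∀ n, N ≤ n →
    ∀ idx : Fin R → Fin (d n) × Fin (d n),
      (∀ k l, k ≠ l → Sym2.mk (idx k) ≠ Sym2.mk (idx l)) →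
      |(∫ ω, ∏ k, (A n ω (idx k).1 (idx k).2) ^ 2 ∂ P n)
        - ∏ k, variance (fun ω => A n ω (idx k).1 (idx k).2) (P n)| ≤ ε)

/-- Ordered (plane) trees: a root together with an ordered list of subtrees.  Terms of this
type are exactly the isomorphism classes of ordered trees. -/
inductive OTree : Type where
  | node : List OTree → OTree

namespace OTree

/-- number of vertices -/
def size : OTree → ℕ
  | node ts => 1 + (ts.attach.map fun t => size t.1).sum
decreasing_by
  have := List.sizeOf_lt_of_mem t.2
  simp only [OTree.node.sizeOf_spec]
  omega

/-- Sum, over the labelings of the underlying tree with the root labelled `i`, of the product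
of the entries of `S` over the edges of the tree. -/
def homAux {n : ℕ} (S : Matrix (Fin n) (Fin n) ℝ) : OTree → Fin n → ℝ
  | node ts, i => (ts.attach.map fun t => ∑ j, S i j * homAux S t.1 j).prod
decreasing_by
  have := List.sizeOf_lt_of_mem t.2
  simp only [OTree.node.sizeOf_spec]
  omega

/-- Homomorphism density of (the underlying simple tree of) an ordered tree in a symmetric
`n × n` matrix: `t(T,S) = n^{-#V(T)} ∑_{labelings} ∏_{edges} S`. -/
def homDensity {n : ℕ} (S : Matrix (Fin n) (Fin n) ℝ) (T : OTree) : ℝ :=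
  ((n : ℝ) ^ T.size)⁻¹ * ∑ i, homAux S T i

end OTree

/-! ### Plane trees -/

namespace OTree

theorem size_nil : (node []).size = 1 := by
  simp [size]

theorem size_cons (t : OTree) (ts : List OTree) :
    (node (t :: ts)).size = t.size + (node ts).size := by
  simp only [size, List.map_subtype, List.unattach_attach, List.map_cons,
    List.sum_cons]
  omega

theorem homAux_nil {n : ℕ} (S : Matrix (Fin n) (Fin n) ℝ) (i : Fin n) :
    homAux S (node []) i = 1 := by
  simp [homAux]

theorem homAux_cons {n : ℕ} (S : Matrix (Fin n) (Fin n) ℝ) (t : OTree) (ts : List OTree)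
    (i : Fin n) :
    homAux S (node (t :: ts)) i = (∑ j, S i j * homAux S t j) * homAux S (node ts) i := by
  simp only [homAux, List.map_subtype, List.unattach_attach, List.map_cons, List.prod_cons]

theorem size_pos (T : OTree) : 1 ≤ T.size := by
  cases T
  simp [size]

/-- Grafting: `graft t T` is `T` with `t` added as a new first child of the root. Every plane tree
with at least one edge is uniquely of this form. -/
def graft (t : OTree) : OTree → OTree
  | node ts => node (t :: ts)

theorem size_graft (t T : OTree) : (graft t T).size = t.size + T.size := by
  cases T
  exact size_cons _ _

theorem homAux_graft {n : ℕ} (S : Matrix (Fin n) (Fin n) ℝ) (t T : OTree) (i : Fin n) :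
    homAux S (graft t T) i = (∑ j, S i j * homAux S t j) * homAux S T i := by
  cases T
  exact homAux_cons _ _ _ _

theorem graft_inj {t T t' T' : OTree} (h : graft t T = graft t' T') : t = t' ∧ T = T' := by
  cases T
  cases T'
  simpa [graft] using h

theorem eq_nil_or_graft (T : OTree) : T = node [] ∨ ∃ t T', T = graft t T' := by
  rcases T with ⟨_ | ⟨t, ts⟩⟩
  · exact Or.inl rfl
  · exact Or.inr ⟨t, node ts, rfl⟩

theorem finite_size_eq (m : ℕ) : {T : OTree | T.size = m + 1}.Finite := by
  induction m using Nat.strong_induction_on with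
  | _ m ih =>
    have hfin : (⋃ a ∈ Set.Iio m, ⋃ b ∈ Set.Iio m,
        Set.image2 graft {T : OTree | T.size = a + 1} {T : OTree | T.size = b + 1}).Finite :=
      (Set.finite_Iio m).biUnion fun a ha => (Set.finite_Iio m).biUnion fun b hb =>
        (ih a ha).image2 _ (ih b hb)
    refine (hfin.insert (node [])).subset ?_
    intro T hT
    rcases eq_nil_or_graft T with rfl | ⟨t, T', rfl⟩
    · exact Set.mem_insert _ _
    · right
      simp only [Set.mem_ofPred_eq, size_graft] at hT
      have h1 := size_pos t
      have h2 := size_pos T'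
      simp only [Set.mem_iUnion]
      exact ⟨t.size - 1, by simp; omega, T'.size - 1, by simp; omega,
        t, by simp; omega, T', by simp; omega, rfl⟩

/-- The finite set of plane trees with `m` edges. -/
def trees (m : ℕ) : Finset OTree := (finite_size_eq m).toFinset

theorem mem_trees {m : ℕ} {T : OTree} : T ∈ trees m ↔ T.size = m + 1 := by
  simp [trees]

theorem trees_zero : trees 0 = {node []} := by
  ext T
  rw [mem_trees, Finset.mem_singleton]
  constructor
  · intro h
    rcases eq_nil_or_graft T with rfl | ⟨t, T', rfl⟩
    · rfl
    · have h1 := size_pos t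
      have h2 := size_pos T'
      rw [size_graft] at h
      omega
  · rintro rfl
    exact size_nil

/-- Catalan decomposition of a sum over plane trees: a tree with `m + 1` edges is uniquely a
grafting of two trees with `m` edges altogether. -/
theorem sum_trees_succ (f : OTree → ℝ) (m : ℕ) :
    ∑ T ∈ trees (m + 1), f T =
      ∑ p ∈ Finset.HasAntidiagonal.antidiagonal m, ∑ t ∈ trees p.1, ∑ u ∈ trees p.2, f (graft t u) := by
  simp_rw [← Finset.sum_product']
  rw [Finset.sum_sigma']
  symm
  refine Finset.sum_bij (fun x _ => graft x.2.1 x.2.2) ?_ ?_ ?_ (fun _ _ => rfl)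
  · rintro ⟨⟨a, b⟩, t, u⟩ h
    simp only [Finset.mem_sigma, Finset.HasAntidiagonal.mem_antidiagonal, Finset.mem_product, mem_trees] at h
    show graft t u ∈ trees (m + 1)
    rw [mem_trees, size_graft]
    omega
  · rintro ⟨⟨a, b⟩, t, u⟩ h ⟨⟨a', b'⟩, t', u'⟩ h' he
    simp only [Finset.mem_sigma, Finset.HasAntidiagonal.mem_antidiagonal, Finset.mem_product, mem_trees] at h h'
    obtain ⟨rfl, rfl⟩ : t = t' ∧ u = u' := graft_inj he
    obtain ⟨-, h1, h2⟩ := h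
    obtain ⟨-, h1', h2'⟩ := h'
    obtain rfl : a = a' := by omega
    obtain rfl : b = b' := by omega
    rfl
  · intro T hT
    rw [mem_trees] at hT
    rcases eq_nil_or_graft T with rfl | ⟨t, u, rfl⟩
    · rw [size_nil] at hT
      omega
    · rw [size_graft] at hT
      have h1 := size_pos t
      have h2 := size_pos u
      refine ⟨⟨(t.size - 1, u.size - 1), t, u⟩, ?_, rfl⟩
      simp only [Finset.mem_sigma, Finset.HasAntidiagonal.mem_antidiagonal, Finset.mem_product, mem_trees]
      omega

theorem tsum_size_eq (f : OTree → ℝ) (m : ℕ) :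
    ∑' T : {T : OTree // T.size = m + 1}, f T.1 = ∑ T ∈ trees m, f T := by
  rw [← Finset.tsum_subtype (trees m) f]
  exact (Equiv.subtypeEquivRight fun T => mem_trees.symm).tsum_eq
    (fun T : {T // T ∈ trees m} => f T.1)

/-- The `2m`-th moment attached to the root label `i`: the sum over plane trees with `m` edges of
the weight of all labelings with root label `i`, normalised by `n` for every non-root vertex. -/
def rootMoment {n : ℕ} (S : Matrix (Fin n) (Fin n) ℝ) (i : Fin n) (m : ℕ) : ℝ :=
  (∑ T ∈ trees m, homAux S T i) / (n : ℝ) ^ m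

theorem rootMoment_zero {n : ℕ} (S : Matrix (Fin n) (Fin n) ℝ) (i : Fin n) :
    rootMoment S i 0 = 1 := by
  simp [rootMoment, trees_zero, homAux_nil]

theorem rootMoment_succ {n : ℕ} (S : Matrix (Fin n) (Fin n) ℝ) (i : Fin n) (m : ℕ) :
    rootMoment S i (m + 1) = ∑ p ∈ Finset.HasAntidiagonal.antidiagonal m,
      (∑ j, S i j / n * rootMoment S j p.1) * rootMoment S i p.2 := by
  rw [rootMoment, sum_trees_succ, Finset.sum_div]
  refine Finset.sum_congr rfl fun p hp => ?_
  rw [Finset.HasAntidiagonal.mem_antidiagonal] at hp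
  have e : ∑ j, S i j / n * rootMoment S j p.1 =
      (∑ t ∈ trees p.1, ∑ j, S i j * homAux S t j) / (n : ℝ) ^ (p.1 + 1) := by
    rw [Finset.sum_comm, Finset.sum_div]
    refine Finset.sum_congr rfl fun j _ => ?_
    rw [rootMoment, ← Finset.mul_sum, div_mul_div_comm, pow_succ']
  rw [e, rootMoment, div_mul_div_comm, ← pow_add, ← hp, Finset.sum_mul_sum]
  simp_rw [homAux_graft]
  congr 2
  omega

/-- All moments attached to the root label `i`; the odd ones vanish. -/
def fullMoment {n : ℕ} (S : Matrix (Fin n) (Fin n) ℝ) (i : Fin n) (k : ℕ) : ℝ :=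
  if Even k then rootMoment S i (k / 2) else 0

theorem fullMoment_two_mul {n : ℕ} (S : Matrix (Fin n) (Fin n) ℝ) (i : Fin n) (m : ℕ) :
    fullMoment S i (2 * m) = rootMoment S i m := by
  simp [fullMoment]

theorem fullMoment_odd {n : ℕ} (S : Matrix (Fin n) (Fin n) ℝ) (i : Fin n) (m : ℕ) :
    fullMoment S i (2 * m + 1) = 0 := by
  simp [fullMoment]

theorem fullMoment_add_two {n : ℕ} (S : Matrix (Fin n) (Fin n) ℝ) (i : Fin n) (k : ℕ) :
    fullMoment S i (k + 2) = ∑ p ∈ Finset.HasAntidiagonal.antidiagonal k,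
      (∑ j, S i j / n * fullMoment S j p.1) * fullMoment S i p.2 := by
  rcases Nat.even_or_odd' k with ⟨m, rfl | rfl⟩
  · rw [show 2 * m + 2 = 2 * (m + 1) by ring, fullMoment_two_mul, rootMoment_succ]
    -- only pairs of even numbers contribute
    refine Finset.sum_of_injOn (fun p => (2 * p.1, 2 * p.2)) ?_ ?_ ?_ ?_
    · rintro ⟨a, b⟩ - ⟨a', b'⟩ - h
      simpa using h
    · rintro ⟨a, b⟩ h
      simp at h ⊢
      omega
    · rintro ⟨a, b⟩ h h'
      rw [Finset.HasAntidiagonal.mem_antidiagonal] at h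
      rcases Nat.even_or_odd' b with ⟨b', rfl | rfl⟩
      · exfalso
        apply h'
        refine ⟨(a / 2, b'), ?_, ?_⟩ <;> simp <;> simp at h <;> omega
      · simp [fullMoment_odd]
    · rintro ⟨a, b⟩ -
      simp only [fullMoment_two_mul]
  · rw [show 2 * m + 1 + 2 = 2 * (m + 1) + 1 by ring, fullMoment_odd]
    symm
    refine Finset.sum_eq_zero ?_
    rintro ⟨a, b⟩ h
    rw [Finset.HasAntidiagonal.mem_antidiagonal] at h
    rcases Nat.even_or_odd' b with ⟨b', rfl | rfl⟩
    · obtain ⟨a', rfl⟩ : ∃ a', a = 2 * a' + 1 := ⟨a / 2, by simp at h; omega⟩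
      simp [fullMoment_odd]
    · simp [fullMoment_odd]

end OTree

/-! ### Spectral measures of arrow matrices -/

/-- Real form of the spectral theorem: eigenvectors `v k` whose rank-one forms resolve the
dot product. -/
theorem exists_spectral_resolution {κ : Type} [Fintype κ] [DecidableEq κ] (M : Matrix κ κ ℝ)
    (hM : M.IsSymm) :
    ∃ (v : κ → κ → ℝ) (ev : κ → ℝ), (∀ k, v k ≠ 0) ∧ (∀ k, M *ᵥ v k = ev k • v k) ∧
      ∀ y z : κ → ℝ, ∑ k, (v k ⬝ᵥ y) * (v k ⬝ᵥ z) = y ⬝ᵥ z := by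
  have hH : M.IsHermitian := by
    rw [Matrix.IsHermitian, Matrix.conjTranspose_eq_transpose_of_trivial]
    exact hM
  refine ⟨fun k => WithLp.ofLp (hH.eigenvectorBasis k), hH.eigenvalues, ?_,
    hH.mulVec_eigenvectorBasis, ?_⟩
  · intro k h
    refine hH.eigenvectorBasis.orthonormal.ne_zero k ?_
    ext l
    exact congrFun h l
  · intro y z
    have := hH.eigenvectorBasis.sum_inner_mul_inner (WithLp.toLp 2 y) (WithLp.toLp 2 z)
    simp only [EuclideanSpace.inner_eq_star_dotProduct, star_trivial] at this
    rw [dotProduct_comm y z, ← this]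
    refine Finset.sum_congr rfl fun k _ => ?_
    rw [dotProduct_comm z]

/-- `AtomicMoments s c r`: the sequence `r` is the moment sequence of a positive, finitely
supported measure `ν` on the open interval `(-2s, 2s)` such that `∫ dν(x) / (2s ∓ x) ≤ c / s`.
The last two bounds control the Stieltjes transform of `ν` at the end points; they are what
makes the location of the support propagate through `AtomicMoments.arrow`. -/
def AtomicMoments (s c : ℝ) (r : ℕ → ℝ) : Prop :=
  ∃ (ι : Type) (_ : Fintype ι) (x w : ι → ℝ), (∀ l, 0 ≤ w l) ∧ (∀ l, |x l| < 2 * s) ∧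
    ∑ l, w l / (2 * s - x l) ≤ c / s ∧ ∑ l, w l / (2 * s + x l) ≤ c / s ∧
    ∀ k, r k = ∑ l, w l * x l ^ k

theorem AtomicMoments.sum {s : ℝ} (hs : 0 < s) {J : Type} [Fintype J] {c : J → ℝ}
    (hc : ∀ j, 0 ≤ c j) {b : ℝ} (hcb : ∑ j, c j ≤ b) {r : J → ℕ → ℝ}
    (h : ∀ j, AtomicMoments s 1 (r j)) :
    AtomicMoments s b (fun k => ∑ j, c j * r j k) := by
  choose ι hι x w hw hx h1 h2 hr using h
  have key : ∀ F : ∀ j, ι j → ℝ, (∀ j, ∑ l, w j l / F j l ≤ 1 / s) →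
      ∑ q : Σ j, ι j, c q.1 * w q.1 q.2 / F q.1 q.2 ≤ b / s := by
    intro F hF
    rw [Fintype.sum_sigma]
    calc ∑ j, ∑ l, c j * w j l / F j l = ∑ j, c j * ∑ l, w j l / F j l := by
          simp_rw [Finset.mul_sum, mul_div_assoc]
      _ ≤ ∑ j, c j * (1 / s) :=
          Finset.sum_le_sum fun j _ => mul_le_mul_of_nonneg_left (hF j) (hc j)
      _ = (∑ j, c j) / s := by rw [← Finset.sum_mul]; ring
      _ ≤ b / s := by gcongr
  refine ⟨Σ j, ι j, inferInstance, fun q => x q.1 q.2, fun q => c q.1 * w q.1 q.2,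
    fun q => mul_nonneg (hc _) (hw _ _), fun q => hx _ _,
    key (fun j l => 2 * s - x j l) h1, key (fun j l => 2 * s + x j l) h2, fun k => ?_⟩
  rw [Fintype.sum_sigma]
  refine Finset.sum_congr rfl fun j _ => ?_
  rw [hr, Finset.mul_sum]
  exact Finset.sum_congr rfl fun l _ => by ring

/-- The arrow matrix with zero corner, border `b` and diagonal `x`. -/
def arrow {ι : Type} [DecidableEq ι] (b x : ι → ℝ) : Matrix (Option ι) (Option ι) ℝ
  | none, none => 0
  | none, some l => b l
  | some l, none => b l
  | some l, some l' => if l = l' then x l else 0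

section Arrow

variable {ι : Type} [DecidableEq ι]

theorem arrow_isSymm (b x : ι → ℝ) : (arrow b x).IsSymm := by
  ext p q
  rcases p with _ | p <;> rcases q with _ | q <;> simp only [transpose_apply, arrow]
  by_cases h : p = q
  · simp [h]
  · simp [h, Ne.symm h]

variable [Fintype ι]

theorem arrow_mulVec_none (b x : ι → ℝ) (y : Option ι → ℝ) :
    (arrow b x *ᵥ y) none = ∑ l, b l * y (some l) := by
  simp [mulVec, dotProduct, Fintype.sum_option, arrow]

theorem arrow_mulVec_some (b x : ι → ℝ) (y : Option ι → ℝ) (l : ι) :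
    (arrow b x *ᵥ y) (some l) = b l * y none + x l * y (some l) := by
  simp [mulVec, dotProduct, Fintype.sum_option, arrow, ite_mul]

theorem arrow_neg_mulVec (b x : ι → ℝ) {y : Option ι → ℝ} {e : ℝ}
    (h : arrow b x *ᵥ y = e • y) :
    ∃ z : Option ι → ℝ, z none = - y none ∧ (∀ l, z (some l) = y (some l)) ∧
      arrow b (fun l => - x l) *ᵥ z = (-e) • z := by
  refine ⟨fun p => p.elim (- y none) fun l => y (some l), rfl, fun l => rfl, ?_⟩
  ext p
  rcases p with _ | l
  · have := congrFun h none
    rw [arrow_mulVec_none] at this ⊢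
    simpa using this
  · have := congrFun h (some l)
    rw [arrow_mulVec_some] at this ⊢
    simp at this ⊢
    linarith

/-- Upper bound for the eigenvalues of an arrow matrix. An eigenvalue `e ≥ 2s` would satisfy
the secular equation `e = ∑ b² / (e - x)`, whose right side is at most `s`. -/
theorem arrow_eigenvalue_lt {s : ℝ} (hs : 0 < s) {b x : ι → ℝ} (hx : ∀ l, x l < 2 * s)
    (hb : ∑ l, b l ^ 2 / (2 * s - x l) ≤ s) {y : Option ι → ℝ} {e : ℝ} (hy : y ≠ 0)
    (h : arrow b x *ᵥ y = e • y) : e < 2 * s := by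
  by_contra! he
  have hsome : ∀ l, y (some l) = b l * y none / (e - x l) := by
    intro l
    have h1 := congrFun h (some l)
    rw [arrow_mulVec_some] at h1
    simp only [Pi.smul_apply, smul_eq_mul] at h1
    have := hx l
    rw [eq_div_iff (by linarith)]
    linarith
  have h0 : y none ≠ 0 := by
    intro h0
    apply hy
    ext p
    rcases p with _ | l
    · exact h0
    · simp [hsome, h0]
  have h1 := congrFun h none
  rw [arrow_mulVec_none] at h1
  simp only [Pi.smul_apply, smul_eq_mul, hsome] at h1
  have h2 : e = ∑ l, b l ^ 2 / (e - x l) := by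
    apply mul_right_cancel₀ h0
    rw [← h1, Finset.sum_mul]
    exact Finset.sum_congr rfl fun l _ => by ring
  have h3 : ∑ l, b l ^ 2 / (e - x l) ≤ ∑ l, b l ^ 2 / (2 * s - x l) :=
    Finset.sum_le_sum fun l _ =>
      div_le_div_of_nonneg_left (sq_nonneg _) (by linarith [hx l]) (by linarith)
  linarith

theorem dotProduct_arrow_mulVec {b x : ι → ℝ} {v : Option ι → ℝ} {e : ℝ}
    (h : arrow b x *ᵥ v = e • v) (y : Option ι → ℝ) :
    v ⬝ᵥ (arrow b x *ᵥ y) = e * (v ⬝ᵥ y) := by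
  rw [dotProduct_mulVec, ← mulVec_transpose, (arrow_isSymm b x).eq, h, smul_dotProduct,
    smul_eq_mul]

/-- The Stieltjes transform at `2s` of the spectral measure of an arrow matrix at its corner is the
corner entry of the resolvent, `1 / (2s - ∑ b² / (2s - x))`. -/
theorem arrow_resolvent_le {s : ℝ} (hs : 0 < s) {b x : ι → ℝ} (hx : ∀ l, x l < 2 * s)
    (hb : ∑ l, b l ^ 2 / (2 * s - x l) ≤ s) {v : Option ι → Option ι → ℝ} {ev : Option ι → ℝ}
    (hev : ∀ k, ev k < 2 * s) (h : ∀ k, arrow b x *ᵥ v k = ev k • v k)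
    (hv : ∀ y z : Option ι → ℝ, ∑ k, (v k ⬝ᵥ y) * (v k ⬝ᵥ z) = y ⬝ᵥ z) :
    ∑ k, v k none ^ 2 / (2 * s - ev k) ≤ 1 / s := by
  set g := ∑ l, b l ^ 2 / (2 * s - x l) with hg
  -- `y` solves `(2s - M) y = e`, where `e` is the corner basis vector
  let y : Option ι → ℝ := fun p =>
    p.elim (1 / (2 * s - g)) fun l => b l * (1 / (2 * s - g)) / (2 * s - x l)
  have hgs : 2 * s - g ≠ 0 := by linarith
  have hy : (2 * s) • y - arrow b x *ᵥ y = Pi.single none 1 := by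
    ext p
    rcases p with _ | l
    · rw [Pi.sub_apply, arrow_mulVec_none]
      simp only [y, Pi.smul_apply, smul_eq_mul, Option.elim, Pi.single_eq_same]
      have : ∑ l, b l * (b l * (1 / (2 * s - g)) / (2 * s - x l)) = g * (1 / (2 * s - g)) := by
        rw [hg, Finset.sum_mul]
        exact Finset.sum_congr rfl fun l _ => by ring
      rw [this, ← sub_mul, mul_one_div_cancel hgs]
    · have := hx l
      have h' : 2 * s - x l ≠ 0 := by linarith
      rw [Pi.sub_apply, arrow_mulVec_some]
      simp only [y, Pi.smul_apply, smul_eq_mul, Option.elim]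
      rw [Pi.single_eq_of_ne (by simp)]
      field_simp
      ring
  have hk : ∀ k, v k none ^ 2 / (2 * s - ev k) = (v k ⬝ᵥ Pi.single none 1) * (v k ⬝ᵥ y) := by
    intro k
    have h1 := congrArg (fun z => v k ⬝ᵥ z) hy
    simp only [dotProduct_sub, dotProduct_smul, smul_eq_mul, dotProduct_arrow_mulVec (h k),
      dotProduct_single, mul_one] at h1
    have := hev k
    rw [dotProduct_single, mul_one, div_eq_iff (by linarith), ← h1]
    ring
  rw [Finset.sum_congr rfl fun k _ => hk k, hv, single_dotProduct, one_mul]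
  exact one_div_le_one_div_of_le hs (by linarith)

/-- First-return decomposition of the corner entries of the powers of an arrow matrix. -/
theorem arrow_recurrence (b x : ι → ℝ) (Y : ℕ → Option ι → ℝ)
    (h0 : Y 0 = Pi.single none 1) (hY : ∀ k, Y (k + 1) = arrow b x *ᵥ Y k) (k : ℕ) :
    Y (k + 2) none = ∑ p ∈ Finset.HasAntidiagonal.antidiagonal k,
      (∑ l, b l ^ 2 * x l ^ p.1) * Y p.2 none := by
  have hsome : ∀ k l, Y (k + 1) (some l) =
      b l * ∑ p ∈ Finset.HasAntidiagonal.antidiagonal k, x l ^ p.1 * Y p.2 none := by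
    intro k l
    induction k with
    | zero => rw [hY, arrow_mulVec_some]; simp [h0]
    | succ k ih =>
      rw [hY, arrow_mulVec_some, ih, Finset.Nat.sum_antidiagonal_succ, pow_zero, one_mul,
        mul_add, Finset.mul_sum, Finset.mul_sum, Finset.mul_sum]
      congr 1
      exact Finset.sum_congr rfl fun p _ => by ring
  rw [hY, arrow_mulVec_none]
  simp_rw [hsome, Finset.mul_sum, Finset.sum_mul]
  rw [Finset.sum_comm]
  exact Finset.sum_congr rfl fun p _ => Finset.sum_congr rfl fun l _ => by ring

end Arrow

/-- If `ρ` is the moment sequence of an atomic measure `ν`, then the spectral measure at the corner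
of the arrow matrix built from `ν` is a probability measure whose moments `r` solve the
first-return recurrence driven by `ρ`. -/
theorem AtomicMoments.arrow {s : ℝ} (hs : 0 < s) {ρ : ℕ → ℝ}
    (h : AtomicMoments s (s ^ 2) ρ) :
    ∃ r : ℕ → ℝ, AtomicMoments s 1 r ∧ r 0 = 1 ∧ r 1 = 0 ∧
      ∀ k, r (k + 2) = ∑ p ∈ Finset.HasAntidiagonal.antidiagonal k, ρ p.1 * r p.2 := by
  classical
  obtain ⟨ι, hι, x, w, hw, hx, h1, h2, hρ⟩ := h
  set b : ι → ℝ := fun l => √(w l) with hb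
  have hb2 : ∀ l, b l ^ 2 = w l := fun l => Real.sq_sqrt (hw l)
  obtain ⟨v, ev, hv0, hev, hv⟩ := exists_spectral_resolution (_root_.arrow b x) (arrow_isSymm b x)
  have hss : s ^ 2 / s = s := by field_simp
  have hxu : ∀ l, x l < 2 * s := fun l => (abs_lt.1 (hx l)).2
  have hxl : ∀ l, - x l < 2 * s := fun l => by linarith [(abs_lt.1 (hx l)).1]
  have hbu : ∑ l, b l ^ 2 / (2 * s - x l) ≤ s := by simpa only [hb2, hss] using h1
  have hbl : ∑ l, b l ^ 2 / (2 * s - - x l) ≤ s := by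
    simpa only [hb2, hss, sub_neg_eq_add] using h2
  have heu : ∀ k, ev k < 2 * s := fun k => arrow_eigenvalue_lt hs hxu hbu (hv0 k) (hev k)
  -- lower bounds: flip the sign of the corner coordinate and of all eigenvalues
  choose z hzn hzs hz using fun k => arrow_neg_mulVec b x (hev k)
  have hel : ∀ k, - ev k < 2 * s := by
    intro k
    refine arrow_eigenvalue_lt hs hxl hbl ?_ (hz k)
    intro hk
    apply hv0 k
    ext p
    rcases p with _ | l
    · have := hzn k
      rw [hk] at this
      simpa using this.symm
    · rw [← hzs, hk]
  have hzv : ∀ y y' : Option ι → ℝ, ∑ k, (z k ⬝ᵥ y) * (z k ⬝ᵥ y') = y ⬝ᵥ y' := by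
    have flip : ∀ k (y : Option ι → ℝ), z k ⬝ᵥ y =
        v k ⬝ᵥ (fun p => p.elim (- y none) fun l => y (some l)) := by
      intro k y
      simp [dotProduct, Fintype.sum_option, hzn, hzs]
    intro y y'
    simp_rw [flip, hv]
    simp [dotProduct, Fintype.sum_option]
  let Y : ℕ → Option ι → ℝ := fun k => k.rec (Pi.single none 1) fun _ y => _root_.arrow b x *ᵥ y
  have hY0 : Y 0 = Pi.single none 1 := rfl
  have hYs : ∀ k, Y (k + 1) = _root_.arrow b x *ᵥ Y k := fun k => rfl
  refine ⟨fun k => Y k none, ⟨Option ι, inferInstance, ev, fun k => v k none ^ 2,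
    fun k => sq_nonneg _, fun k => abs_lt.2 ⟨by linarith [hel k], heu k⟩,
    arrow_resolvent_le hs hxu hbu heu hev hv, ?_, ?_⟩, ?_, ?_, ?_⟩
  · have := arrow_resolvent_le hs hxl hbl hel hz hzv
    simpa only [hzn, neg_sq, sub_neg_eq_add] using this
  · intro p
    have hvY : ∀ k, v k ⬝ᵥ Y p = ev k ^ p * v k none := by
      intro k
      induction p with
      | zero => simp [hY0]
      | succ p ih => rw [hYs, dotProduct_arrow_mulVec (hev k), ih]; ring
    have := hv (Pi.single none 1) (Y p)
    simp only [hvY, dotProduct_single, single_dotProduct, mul_one, one_mul] at this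
    show Y p none = _
    rw [← this]
    exact Finset.sum_congr rfl fun k _ => by ring
  · simp [hY0]
  · show Y (0 + 1) none = 0
    rw [hYs, arrow_mulVec_none, hY0]
    simp
  · intro k
    simp only [arrow_recurrence b x Y hY0 hYs k, hb2, hρ]

/-- For every depth `D` there are atomic probability measures, one for each label, whose moments up
to order `D` are the tree sums `OTree.fullMoment`. They are the spectral measures at the root of the
weighted tree of label words `i, j, k, …`, with edge weights `√(S i j / n)`, cut off at depth `D`. -/
theorem exists_atomicMoments_eq {s : ℝ} (hs : 0 < s) {n : ℕ} (S : Matrix (Fin n) (Fin n) ℝ)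
    (hS0 : ∀ i j, 0 ≤ S i j) (hS : ∀ i j, S i j ≤ s ^ 2) (D : ℕ) :
    ∀ i, ∃ r : ℕ → ℝ, AtomicMoments s 1 r ∧ ∀ k ≤ D, r k = OTree.fullMoment S i k := by
  have hR0 : ∀ i, OTree.fullMoment S i 0 = 1 := fun i => by
    simpa [OTree.rootMoment_zero] using OTree.fullMoment_two_mul S i 0
  have hR1 : ∀ i, OTree.fullMoment S i 1 = 0 := fun i => OTree.fullMoment_odd S i 0
  induction D with
  | zero =>
    intro i
    have h2 : (1 : ℝ) / (2 * s) ≤ 1 / s := one_div_le_one_div_of_le hs (by linarith)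
    refine ⟨fun k => 0 ^ k, ⟨Unit, inferInstance, fun _ => 0, fun _ => 1, by simp,
      by simpa using hs, by simpa using h2, by simpa using h2, by simp⟩, ?_⟩
    intro k hk
    obtain rfl : k = 0 := by omega
    simp [hR0]
  | succ D ih =>
    choose q hq hqD using ih
    intro i
    have hn : (0 : ℝ) < n := by exact_mod_cast i.pos
    have hsum : ∑ j, S i j / n ≤ s ^ 2 := by
      calc ∑ j, S i j / n ≤ ∑ _j : Fin n, s ^ 2 / n :=
            Finset.sum_le_sum fun j _ => by gcongr; exact hS i j
        _ = s ^ 2 := by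
            rw [Finset.sum_const, Finset.card_univ, Fintype.card_fin, nsmul_eq_mul]
            field_simp
    obtain ⟨r, hr, hr0, hr1, hrec⟩ := AtomicMoments.arrow hs
      (AtomicMoments.sum hs (fun j => div_nonneg (hS0 i j) hn.le) hsum hq)
    refine ⟨r, hr, ?_⟩
    intro k
    induction k using Nat.strong_induction_on with
    | _ k ihk =>
      intro hk
      match k, ihk, hk with
      | 0, _, _ => rw [hr0, hR0]
      | 1, _, _ => rw [hr1, hR1]
      | k + 2, ihk, hk =>
        rw [hrec, OTree.fullMoment_add_two]
        refine Finset.sum_congr rfl fun p hp => ?_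
        rw [Finset.HasAntidiagonal.mem_antidiagonal] at hp
        rw [ihk p.2 (by omega) (by omega)]
        congr 1
        refine Finset.sum_congr rfl fun j _ => ?_
        rw [hqD j p.1 (by omega)]

/-! ### Compactness and determinacy -/

theorem AtomicMoments.exists_probabilityMeasure {s : ℝ} {r : ℕ → ℝ} (h : AtomicMoments s 1 r)
    (h0 : r 0 = 1) :
    ∃ ν : ProbabilityMeasure (Set.Icc (-(2 * s)) (2 * s)),
      ∀ k : ℕ, ∫ x, (x : ℝ) ^ k ∂(ν : Measure (Set.Icc (-(2 * s)) (2 * s))) = r k := by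
  obtain ⟨ι, hι, x, w, hw, hx, -, -, hr⟩ := h
  let a : ι → Set.Icc (-(2 * s)) (2 * s) := fun l =>
    ⟨x l, (abs_lt.1 (hx l)).1.le, (abs_lt.1 (hx l)).2.le⟩
  let ν : Measure (Set.Icc (-(2 * s)) (2 * s)) :=
    ∑ l, ENNReal.ofReal (w l) • Measure.dirac (a l)
  have hν : IsProbabilityMeasure ν := by
    constructor
    simp only [ν, Measure.coe_finsetSum, Finset.sum_apply, Measure.smul_apply, measure_univ,
      smul_eq_mul, mul_one]
    rw [← ENNReal.ofReal_sum_of_nonneg fun l _ => hw l]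
    have : ∑ l, w l = 1 := by simpa [h0] using (hr 0).symm
    simp [this]
  refine ⟨⟨ν, hν⟩, fun k => ?_⟩
  show ∫ x, (x : ℝ) ^ k ∂ν = r k
  rw [integral_finsetSum_measure, hr]
  · refine Finset.sum_congr rfl fun l _ => ?_
    rw [integral_smul_measure, integral_dirac, ENNReal.toReal_ofReal (hw l), smul_eq_mul]
  · intro l _
    exact (integrable_dirac (by simp)).smul_measure ENNReal.ofReal_ne_top

theorem integrable_of_Icc {K : ℝ} {μ : Measure ℝ} [IsFiniteMeasure μ]
    (hμ : μ (Set.Icc (-K) K)ᶜ = 0) {f : ℝ → ℝ} (hf : Continuous f) : Integrable f μ := by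
  rw [← Measure.restrict_eq_self_of_ae_mem (s := Set.Icc (-K) K) (μ := μ) hμ]
  exact hf.continuousOn.integrableOn_compact isCompact_Icc

/-- Pointwise limits of moment sequences of probability measures on a fixed compact interval are
again moment sequences of such measures. -/
theorem exists_measure_of_tendsto {K : ℝ} (ν : ℕ → ProbabilityMeasure (Set.Icc (-K) K))
    {m : ℕ → ℝ}
    (h : ∀ k, Tendsto (fun n => ∫ x, (x : ℝ) ^ k ∂(ν n : Measure (Set.Icc (-K) K))) atTop
      (𝓝 (m k))) :
    ∃ μ : Measure ℝ, IsProbabilityMeasure μ ∧ μ (Set.Icc (-K) K)ᶜ = 0 ∧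
      ∀ k : ℕ, ∫ x, x ^ k ∂μ = m k := by
  -- a limit along an ultrafilter finer than `atTop` exists by compactness
  let U : Ultrafilter ℕ := Ultrafilter.of atTop
  have hU : (U : Filter ℕ) ≤ atTop := Ultrafilter.of_le _
  obtain ⟨ρ, -, hρ⟩ := isCompact_univ.ultrafilter_le_nhds (U.map ν) (by simp)
  have hρ' : Tendsto ν U (𝓝 ρ) := hρ
  rw [ProbabilityMeasure.tendsto_iff_forall_integral_tendsto] at hρ'
  have hm : ∀ k, ∫ x, (x : ℝ) ^ k ∂(ρ : Measure (Set.Icc (-K) K)) = m k := by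
    intro k
    let f : C(Set.Icc (-K) K, ℝ) := ⟨fun x => (x : ℝ) ^ k, by fun_prop⟩
    exact tendsto_nhds_unique (hρ' (BoundedContinuousFunction.mkOfCompact f)) ((h k).mono_left hU)
  refine ⟨(ρ : Measure (Set.Icc (-K) K)).map Subtype.val,
    Measure.isProbabilityMeasure_map measurable_subtype_coe.aemeasurable, ?_, ?_⟩
  · rw [Measure.map_apply measurable_subtype_coe measurableSet_Icc.compl]
    simp
  · intro k
    rw [integral_map measurable_subtype_coe.aemeasurable
      (continuous_pow k).aestronglyMeasurable, hm]

/-- A measure with the same moments as one living on `[-K, K]` also lives on `[-K, K]`. -/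
theorem measure_compl_Icc_of_moments {K : ℝ} (hK : 0 < K) {μ μ' : Measure ℝ}
    [IsProbabilityMeasure μ] [IsProbabilityMeasure μ'] (hμ : μ (Set.Icc (-K) K)ᶜ = 0)
    (hint : ∀ k : ℕ, Integrable (fun x => x ^ k) μ')
    (h : ∀ k : ℕ, ∫ x, x ^ k ∂μ' = ∫ x, x ^ k ∂μ) : μ' (Set.Icc (-K) K)ᶜ = 0 := by
  have hae : ∀ᵐ x ∂μ, x ∈ Set.Icc (-K) K := hμ
  have hbound : ∀ p : ℕ, ∫ x, x ^ (2 * p) ∂μ' ≤ K ^ (2 * p) := by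
    intro p
    rw [h]
    calc ∫ x, x ^ (2 * p) ∂μ ≤ ∫ _x, K ^ (2 * p) ∂μ := by
          refine integral_mono_ae (integrable_of_Icc hμ (continuous_pow _))
            (integrable_const _) ?_
          filter_upwards [hae] with x hx
          rw [pow_mul, pow_mul]
          exact pow_le_pow_left₀ (sq_nonneg _) (sq_le_sq' hx.1 hx.2) _
      _ = K ^ (2 * p) := by simp
  have hzero : ∀ L : ℝ, K < L → μ' {x | L ≤ |x|} = 0 := by
    intro L hL
    have hL0 : 0 < L := hK.trans hL
    have hle : ∀ p : ℕ, μ'.real {x | L ≤ |x|} ≤ ((K / L) ^ 2) ^ p := by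
      intro p
      have h1 := mul_meas_ge_le_integral_of_nonneg (μ := μ') (f := fun x : ℝ => x ^ (2 * p))
        (ae_of_all _ fun x => (even_two_mul p).pow_nonneg x) (hint _) (L ^ (2 * p))
      have h2 : μ'.real {x | L ≤ |x|} ≤ μ'.real {x | L ^ (2 * p) ≤ x ^ (2 * p)} := by
        refine measureReal_mono fun x hx => ?_
        have hx' : L ≤ |x| := hx
        show L ^ (2 * p) ≤ x ^ (2 * p)
        rw [← (even_two_mul p).pow_abs x]
        exact pow_le_pow_left₀ hL0.le hx' _
      rw [← pow_mul, div_pow, le_div_iff₀ (by positivity), mul_comm]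
      exact (mul_le_mul_of_nonneg_left h2 (by positivity)).trans (h1.trans (hbound p))
    have hlim : Tendsto (fun p : ℕ => ((K / L) ^ 2) ^ p) atTop (𝓝 0) := by
      refine tendsto_pow_atTop_nhds_zero_of_lt_one (by positivity) ?_
      exact pow_lt_one₀ (by positivity) ((div_lt_one hL0).2 hL) two_ne_zero
    have h3 : μ'.real {x | L ≤ |x|} = 0 :=
      le_antisymm (ge_of_tendsto' hlim hle) measureReal_nonneg
    rwa [measureReal_eq_zero_iff] at h3
  have hsub : (Set.Icc (-K) K)ᶜ ⊆ ⋃ N : ℕ, {x : ℝ | K + 1 / ((N : ℝ) + 1) ≤ |x|} := by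
    intro x hx
    have hx' : K < |x| := by
      by_contra! hc
      exact hx (abs_le.1 hc)
    obtain ⟨N, hN⟩ := exists_nat_one_div_lt (sub_pos.2 hx')
    refine Set.mem_iUnion.2 ⟨N, ?_⟩
    show K + 1 / ((N : ℝ) + 1) ≤ |x|
    linarith
  refine measure_mono_null hsub (measure_iUnion_null fun N => hzero _ ?_)
  have : 0 < 1 / ((N : ℝ) + 1) := by positivity
  linarith

theorem integral_polynomial_eq {μ μ' : Measure ℝ}
    (hint : ∀ k : ℕ, Integrable (fun x => x ^ k) μ)
    (hint' : ∀ k : ℕ, Integrable (fun x => x ^ k) μ')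
    (h : ∀ k : ℕ, ∫ x, x ^ k ∂μ' = ∫ x, x ^ k ∂μ) (p : Polynomial ℝ) :
    ∫ x, p.eval x ∂μ' = ∫ x, p.eval x ∂μ := by
  simp_rw [Polynomial.eval_eq_sum_range]
  rw [integral_finsetSum _ fun k _ => (hint' k).const_mul _,
    integral_finsetSum _ fun k _ => (hint k).const_mul _]
  simp_rw [integral_const_mul, h]

/-- Determinacy of the moment problem for compactly supported measures, by the Weierstrass
approximation theorem. -/
theorem eq_of_moments {K : ℝ} (hK : 0 < K) {μ μ' : Measure ℝ}
    [IsProbabilityMeasure μ] [IsProbabilityMeasure μ'] (hμ : μ (Set.Icc (-K) K)ᶜ = 0)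
    (hint : ∀ k : ℕ, Integrable (fun x => x ^ k) μ')
    (h : ∀ k : ℕ, ∫ x, x ^ k ∂μ' = ∫ x, x ^ k ∂μ) : μ' = μ := by
  have hμ' := measure_compl_Icc_of_moments hK hμ hint h
  refine ext_of_forall_integral_eq_of_IsFiniteMeasure fun f => ?_
  have hclose : ∀ ε > 0, |∫ x, f x ∂μ' - ∫ x, f x ∂μ| ≤ 0 + ε := by
    intro ε hε
    obtain ⟨p, hp⟩ := exists_polynomial_near_of_continuousOn (-K) K f f.continuous.continuousOn
      (ε / 2) (by linarith)
    have hone : ∀ (ρ : Measure ℝ) [IsProbabilityMeasure ρ], ρ (Set.Icc (-K) K)ᶜ = 0 →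
        |∫ x, p.eval x ∂ρ - ∫ x, f x ∂ρ| ≤ ε / 2 := by
      intro ρ _ hρ
      have hae : ∀ᵐ x ∂ρ, x ∈ Set.Icc (-K) K := hρ
      rw [← integral_sub (integrable_of_Icc hρ p.continuous) (integrable_of_Icc hρ f.continuous)]
      have := norm_integral_le_of_norm_le_const (μ := ρ)
        (f := fun x => p.eval x - f x) (C := ε / 2) (by
          filter_upwards [hae] with x hx
          exact (hp x hx).le)
      simpa using this
    have h1 := abs_le.1 (hone μ hμ)
    have h2 := abs_le.1 (hone μ' hμ')
    have h3 := integral_polynomial_eq (fun k => integrable_of_Icc hμ (continuous_pow k)) hint h p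
    rw [abs_le]
    constructor <;> linarith
  have := le_of_forall_pos_le_add hclose
  exact sub_eq_zero.1 (abs_nonpos_iff.1 this)

/-! ### Variance profiles -/

/-- The average over the root label of the moments `OTree.rootMoment` is the sum of the
homomorphism densities. -/
theorem OTree.average_rootMoment {n : ℕ} (S : Matrix (Fin n) (Fin n) ℝ) (m : ℕ) :
    ∑ i, 1 / (n : ℝ) * rootMoment S i m = ∑ T ∈ trees m, homDensity S T := by
  simp_rw [rootMoment, ← mul_div_assoc, Finset.mul_sum, Finset.sum_div]
  rw [Finset.sum_comm]
  refine Finset.sum_congr rfl fun T hT => ?_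
  rw [homDensity, mem_trees.1 hT, Finset.mul_sum]
  refine Finset.sum_congr rfl fun i _ => ?_
  rw [pow_succ, mul_inv]
  ring

theorem exists_variance_bound (Ω : ℕ → Type) [∀ n, MeasurableSpace (Ω n)]
    (P : ∀ n, Measure (Ω n)) [∀ n, IsProbabilityMeasure (P n)]
    (A : (n : ℕ) → Ω n → Matrix (Fin n) (Fin n) ℝ)
    (hmeas : ∀ n i j, Measurable fun ω => A n ω i j)
    (hAU : ApproxUncorrelatedVP P (fun n => n) A) :
    ∃ C : ℝ, 0 < C ∧ ∀ n i j, variance (fun ω => A n ω i j) (P n) ≤ C := by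
  obtain ⟨C, hC, h⟩ := hAU.1 1 0 (Nat.zero_le _) (fun _ => 2) (by simp)
  refine ⟨C, hC, fun n i j => ?_⟩
  have h1 := h n (fun _ => (i, j)) fun k l hkl => (hkl (Subsingleton.elim k l)).elim
  simp only [Finset.univ_unique, Finset.prod_singleton, Nat.cast_zero, neg_zero, zero_div,
    Real.rpow_zero, mul_one] at h1
  refine (variance_le_expectation_sq (hmeas n i j).aestronglyMeasurable).trans ?_
  exact (le_abs_self _).trans h1

/-- The averaged tree sums of a nonnegative bounded matrix are, up to order `D`, the moments of a
probability measure on `[-2s, 2s]`. -/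
theorem exists_probabilityMeasure_average {s : ℝ} (hs : 0 < s) {n : ℕ} (hn : 0 < n)
    (S : Matrix (Fin n) (Fin n) ℝ)
    (hS0 : ∀ i j, 0 ≤ S i j) (hS : ∀ i j, S i j ≤ s ^ 2) (D : ℕ) :
    ∃ ν : ProbabilityMeasure (Set.Icc (-(2 * s)) (2 * s)),
      ∀ k ≤ D, ∫ x, (x : ℝ) ^ k ∂(ν : Measure (Set.Icc (-(2 * s)) (2 * s))) =
        ∑ i, 1 / (n : ℝ) * OTree.fullMoment S i k := by
  choose r hr hrD using exists_atomicMoments_eq hs S hS0 hS D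
  have hn' : (n : ℝ) ≠ 0 := by exact_mod_cast hn.ne'
  have hone : ∑ _i : Fin n, 1 / (n : ℝ) = 1 := by
    simp [hn']
  have h0 : ∑ i, 1 / (n : ℝ) * r i 0 = 1 := by
    have : ∀ i, r i 0 = 1 := fun i => by
      rw [hrD i 0 (Nat.zero_le _)]
      simpa [OTree.rootMoment_zero] using OTree.fullMoment_two_mul S i 0
    simp_rw [this, mul_one]
    exact hone
  obtain ⟨ν, hν⟩ := (AtomicMoments.sum hs (fun _ => by positivity) hone.le
    hr).exists_probabilityMeasure h0
  refine ⟨ν, fun k hk => ?_⟩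
  rw [hν]
  exact Finset.sum_congr rfl fun i _ => by rw [hrD i k hk]

/-- **Theorem.** If `(A_n)` is approximately uncorrelated with variance profile `S_n` and all
tree homomorphism densities `t(T,S_n)` converge, then there is a unique probability measure `μ`
with `m_{2m}(μ) = ∑_{T ∈ 𝒯_m} lim_n t(T,S_n)` and vanishing odd moments, and `μ` is compactly
supported. -/
theorem moment_measure_exists_unique_compact
    (Ω : ℕ → Type) [∀ n, MeasurableSpace (Ω n)]
    (P : ∀ n, Measure (Ω n)) [∀ n, IsProbabilityMeasure (P n)]
    (A : (n : ℕ) → Ω n → Matrix (Fin n) (Fin n) ℝ)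
    (hmeas : ∀ n i j, Measurable fun ω => A n ω i j)
    (hsymm : ∀ n ω, (A n ω).IsSymm)
    (hAU : ApproxUncorrelatedVP P (fun n => n) A)
    (S : (n : ℕ) → Matrix (Fin n) (Fin n) ℝ)
    (hS : ∀ n, S n = Matrix.of fun i j => variance (fun ω => A n ω i j) (P n))
    (htree : ∀ T : OTree, ∃ L : ℝ, Tendsto (fun n => OTree.homDensity (S n) T) atTop (nhds L)) :
    ∃ L : OTree → ℝ,
      (∀ T, Tendsto (fun n => OTree.homDensity (S n) T) atTop (nhds (L T))) ∧
      ∃ μ : Measure ℝ,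
        (IsProbabilityMeasure μ ∧ (∀ k : ℕ, Integrable (fun x => x ^ k) μ) ∧
          (∀ m : ℕ, ∫ x, x ^ (2 * m) ∂μ = ∑' T : {T : OTree // T.size = m + 1}, L T.1) ∧
          (∀ m : ℕ, ∫ x, x ^ (2 * m + 1) ∂μ = 0)) ∧
        -- uniqueness
        (∀ μ' : Measure ℝ,
          (IsProbabilityMeasure μ' ∧ (∀ k : ℕ, Integrable (fun x => x ^ k) μ') ∧
            (∀ m : ℕ, ∫ x, x ^ (2 * m) ∂μ' = ∑' T : {T : OTree // T.size = m + 1}, L T.1) ∧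
            (∀ m : ℕ, ∫ x, x ^ (2 * m + 1) ∂μ' = 0)) → μ' = μ) ∧
        -- μ is compactly supported
        (∃ C : ℝ, μ (Set.Icc (-C) C)ᶜ = 0) := by
  choose L hL using htree
  obtain ⟨C, hC, hvar⟩ := exists_variance_bound Ω P A hmeas hAU
  set s := √C with hs_def
  have hs : 0 < s := Real.sqrt_pos.2 hC
  have hS0 : ∀ n i j, 0 ≤ S n i j := fun n i j => by
    rw [hS]
    exact variance_nonneg _ _
  have hSC : ∀ n i j, S n i j ≤ s ^ 2 := fun n i j => by
    rw [hS, Real.sq_sqrt hC.le]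
    exact hvar n i j
  -- the size is shifted by one, as there is no probability measure attached to the empty matrix
  choose ν hν using fun n : ℕ =>
    exists_probabilityMeasure_average hs n.succ_pos (S (n + 1)) (hS0 _) (hSC _) n
  let M : ℕ → ℝ := fun k => if Even k then ∑ T ∈ OTree.trees (k / 2), L T else 0
  have hM : ∀ k, Tendsto (fun n => ∫ x, (x : ℝ) ^ k
      ∂(ν n : Measure (Set.Icc (-(2 * s)) (2 * s)))) atTop (𝓝 (M k)) := by
    intro k
    have heq : ∀ᶠ n in atTop, ∑ i, 1 / ((n + 1 : ℕ) : ℝ) * OTree.fullMoment (S (n + 1)) i k =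
        ∫ x, (x : ℝ) ^ k ∂(ν n : Measure (Set.Icc (-(2 * s)) (2 * s))) := by
      filter_upwards [eventually_ge_atTop k] with n hn
      exact (hν n k hn).symm
    refine Tendsto.congr' heq ?_
    rcases Nat.even_or_odd' k with ⟨m, rfl | rfl⟩
    · simp only [M, OTree.fullMoment_two_mul, OTree.average_rootMoment, even_two_mul, if_true,
        Nat.mul_div_cancel_left m two_pos]
      exact tendsto_finsetSum _ fun T _ => (hL T).comp (tendsto_add_atTop_nat 1)
    · simp [M, OTree.fullMoment_odd]
  obtain ⟨μ, hμ, hsupp, hmom⟩ := exists_measure_of_tendsto ν hM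
  have hM2 : ∀ m, M (2 * m) = ∑' T : {T : OTree // T.size = m + 1}, L T.1 := fun m => by
    rw [OTree.tsum_size_eq]
    simp [M]
  have hM1 : ∀ m, M (2 * m + 1) = 0 := fun m => by simp [M]
  refine ⟨L, hL, μ, ⟨hμ, fun k => integrable_of_Icc hsupp (continuous_pow k),
    fun m => by rw [hmom, hM2], fun m => by rw [hmom, hM1]⟩, ?_, 2 * s, hsupp⟩
  rintro μ' ⟨hμ', hint, heven, hodd⟩
  refine eq_of_moments (K := 2 * s) (by linarith) hsupp hint fun k => ?_
  rw [hmom]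
  rcases Nat.even_or_odd' k with ⟨m, rfl | rfl⟩
  · rw [heven, hM2]
  · rw [hodd, hM1]

end
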